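/- Let g be a continuous complex-valued function on the closed unit disk and ψ ∈ L¹(𝕋) bounded. If f : 𝔻 → ℂ satisfies f(z) = P_ψ(z) − G_g(z) for all z ∈ 𝔻 (equivalently, f ∈ C²(𝔻) with Δf = g and boundary values ψ), then for every z ∈ 𝔻 \ {0}: |f_z(z)| + |f_{z̄}(z)| ≤ (4‖P_ψ‖_∞/π)·1/(1−|z|²) + 2μ(|z|), where μ(r) = (‖g‖_∞(1−r²)/(8r²))·[(1+r²)/(1−r²) − ((1−r²)/(2r))·log((1+r)/(1−r))] for r ∈ (0,1). -/

import Mathlib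

open Metric MeasureTheory Set Filter

noncomputable section

/-- The Wirtinger derivative `∂f/∂z = (f_x - i f_y)/2`. -/
def wdz (f : ℂ → ℂ) (z : ℂ) : ℂ :=
  (fderiv ℝ f z 1 - Complex.I * fderiv ℝ f z Complex.I) / 2

/-- The Wirtinger derivative `∂f/∂z̄ = (f_x + i f_y)/2`. -/
def wdzbar (f : ℂ → ℂ) (z : ℂ) : ℂ :=
  (fderiv ℝ f z 1 + Complex.I * fderiv ℝ f z Complex.I) / 2

/-- The Laplacian `Δf = f_xx + f_yy` (equivalently `4 f_{z z̄}`). -/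
def lap (f : ℂ → ℂ) (z : ℂ) : ℂ :=
  fderiv ℝ (fun w => fderiv ℝ f w 1) z 1 +
    fderiv ℝ (fun w => fderiv ℝ f w Complex.I) z Complex.I

/-- The Poisson integral `P_ψ(z) = (1/2π) ∫₀^{2π} ((1-|z|²)/|1-z e^{-it}|²) ψ(e^{it}) dt`. -/
def poissonIntegral (ψ : ℂ → ℂ) (z : ℂ) : ℂ :=
  (1 / (2 * Real.pi) : ℝ) • ∫ t in (0:ℝ)..(2 * Real.pi),
    (((1 - ‖z‖ ^ 2) / ‖1 - z * Complex.exp (-(Complex.I * (t : ℂ)))‖ ^ 2 : ℝ) : ℂ) *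
      ψ (Complex.exp (Complex.I * (t : ℂ)))

/-- The Green potential `G_g(z) = (1/2π) ∫_𝔻 log|(1 - z w̄)/(z - w)| g(w) dA(w)`. -/
def greenPotential (g : ℂ → ℂ) (z : ℂ) : ℂ :=
  (1 / (2 * Real.pi) : ℝ) • ∫ w in ball (0:ℂ) 1,
    ((Real.log ‖(1 - z * (starRingEnd ℂ) w) / (z - w)‖ : ℝ) : ℂ) * g w

/-- `sup_{z ∈ 𝔻} |g(z)|`. -/
def supD (g : ℂ → ℂ) : ℝ := sSup ((fun z => ‖g z‖) '' ball (0:ℂ) 1)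

/-- The function `μ(r)` with constant `c` in place of `‖g‖_∞`. -/
def mu (c r : ℝ) : ℝ :=
  c * (1 - r ^ 2) / (8 * r ^ 2) *
    ((1 + r ^ 2) / (1 - r ^ 2) - (1 - r ^ 2) / (2 * r) * Real.log ((1 + r) / (1 - r)))


def mob (a w : ℂ) : ℂ := (a - w) / (1 - (starRingEnd ℂ) a * w)

lemma mob_den_sub (a w : ℂ) :
    ‖1 - (starRingEnd ℂ) a * w‖ ^ 2 - ‖a - w‖ ^ 2 = (1 - ‖a‖ ^ 2) * (1 - ‖w‖ ^ 2) := by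
  simp only [← Complex.normSq_eq_norm_sq, Complex.normSq_apply]
  simp
  ring

lemma mob_den_ne {a w : ℂ} (ha : ‖a‖ < 1) (hw : ‖w‖ < 1) : 1 - (starRingEnd ℂ) a * w ≠ 0 := by
  intro h
  have h1 : (starRingEnd ℂ) a * w = 1 := (sub_eq_zero.mp h).symm
  have h2 : ‖a‖ * ‖w‖ = 1 := by
    have := congrArg norm h1
    simpa using this
  nlinarith [norm_nonneg a, norm_nonneg w]

lemma mob_norm_lt {a w : ℂ} (ha : ‖a‖ < 1) (hw : ‖w‖ < 1) : ‖mob a w‖ < 1 := by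
  have hd : 0 < ‖1 - (starRingEnd ℂ) a * w‖ := norm_pos_iff.mpr (mob_den_ne ha hw)
  rw [mob, norm_div, div_lt_one hd]
  have h := mob_den_sub a w
  have h3 : 0 < (1 - ‖a‖ ^ 2) * (1 - ‖w‖ ^ 2) := by
    apply mul_pos <;> nlinarith [norm_nonneg a, norm_nonneg w]
  exact lt_of_pow_lt_pow_left₀ 2 hd.le (by linarith)

lemma one_sub_conj_mul_self (a : ℂ) : (1:ℂ) - (starRingEnd ℂ) a * a = ((1 - ‖a‖ ^ 2 : ℝ) : ℂ) := by
  have := Complex.conj_mul' a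
  rw [this]; push_cast; ring

lemma one_sub_sq_pos {a : ℂ} (ha : ‖a‖ < 1) : 0 < 1 - ‖a‖ ^ 2 := by
  nlinarith [norm_nonneg a]

lemma mob_hasDerivAt {a w : ℂ} (ha : ‖a‖ < 1) (hw : ‖w‖ < 1) :
    HasDerivAt (mob a) (-((1 - ‖a‖ ^ 2 : ℝ) : ℂ) / (1 - (starRingEnd ℂ) a * w) ^ 2) w := by
  have hd := mob_den_ne ha hw
  have h1 : HasDerivAt (fun w : ℂ => a - w) (-1) w := by
    simpa using (hasDerivAt_id w).const_sub a
  have h2 : HasDerivAt (fun w : ℂ => 1 - (starRingEnd ℂ) a * w) (-(starRingEnd ℂ) a) w := by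
    simpa using ((hasDerivAt_id w).const_mul ((starRingEnd ℂ) a)).const_sub 1
  convert! h1.div h2 hd using 1
  rw [← one_sub_conj_mul_self]
  ring

lemma mob_den_mob {a w : ℂ} (ha : ‖a‖ < 1) (hw : ‖w‖ < 1) :
    1 - (starRingEnd ℂ) a * mob a w = ((1 - ‖a‖ ^ 2 : ℝ) : ℂ) / (1 - (starRingEnd ℂ) a * w) := by
  have hd := mob_den_ne ha hw
  rw [← one_sub_conj_mul_self, mob]
  field_simp
  ring

lemma mob_invol {a w : ℂ} (ha : ‖a‖ < 1) (hw : ‖w‖ < 1) : mob a (mob a w) = w := by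
  have hd := mob_den_ne ha hw
  have hp : ((1 - ‖a‖ ^ 2 : ℝ) : ℂ) ≠ 0 := by exact_mod_cast (one_sub_sq_pos ha).ne'
  have h1 : a - mob a w = w * ((1 - ‖a‖ ^ 2 : ℝ) : ℂ) / (1 - (starRingEnd ℂ) a * w) := by
    rw [mob, ← one_sub_conj_mul_self, eq_div_iff hd, sub_mul, div_mul_cancel₀ _ hd]
    ring
  rw [mob, mob_den_mob ha hw, h1, div_div_div_cancel_right₀ hd, mul_div_cancel_right₀ _ hp]

lemma cos_sub_sin (w : ℂ) : ‖Complex.cos w‖ ^ 2 - ‖Complex.sin w‖ ^ 2 = Real.cos (2 * w.re) := by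
  have h1 : ((‖Complex.cos w‖ ^ 2 - ‖Complex.sin w‖ ^ 2 : ℝ) : ℂ) = ((Real.cos (2 * w.re) : ℝ) : ℂ) := by
    push_cast
    rw [← Complex.mul_conj', ← Complex.mul_conj', ← Complex.cos_conj, ← Complex.sin_conj,
      ← Complex.cos_add, Complex.add_conj]
    push_cast; rfl
  exact_mod_cast h1

lemma strip_bound {h : ℂ → ℂ} {M : ℝ} (hh : DifferentiableOn ℂ h (ball 0 1))
    (hM : ∀ z ∈ ball (0:ℂ) 1, |(h z).re| < M) {z : ℂ} (hz : z ∈ ball (0:ℂ) 1) :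
    ‖deriv h z‖ ≤ 4 * M / Real.pi * (1 / (1 - ‖z‖ ^ 2)) := by
  have hMpos : 0 < M := lt_of_le_of_lt (abs_nonneg _) (hM z hz)
  have hpi := Real.pi_pos
  set k : ℝ := Real.pi / (4 * M) with hk
  have hkpos : 0 < k := by positivity
  have hcos : ∀ w : ℂ, |w.re| < M → 0 < Real.cos (2 * ((k:ℂ) * w).re) := by
    intro w hw
    apply Real.cos_pos_of_mem_Ioo
    have h2 : (k * M) = Real.pi / 4 := by rw [hk]; field_simp
    have hw' := abs_lt.mp hw
    simp only [Complex.re_ofReal_mul]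
    constructor <;> nlinarith
  have hcne : ∀ w : ℂ, |w.re| < M → Complex.cos ((k:ℂ) * w) ≠ 0 := by
    intro w hw h0
    have := cos_sub_sin ((k:ℂ) * w)
    have h3 := hcos w hw
    rw [← this, h0] at h3
    simp at h3
    nlinarith [sq_nonneg ‖Complex.sin ((k:ℂ) * w)‖]
  have htan : ∀ w : ℂ, |w.re| < M → ‖Complex.tan ((k:ℂ) * w)‖ < 1 := by
    intro w hw
    have hp : 0 < ‖Complex.cos ((k:ℂ) * w)‖ := norm_pos_iff.mpr (hcne w hw)
    rw [Complex.tan, norm_div, div_lt_one hp]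
    have := cos_sub_sin ((k:ℂ) * w)
    have h3 := hcos w hw
    exact lt_of_pow_lt_pow_left₀ 2 hp.le (by linarith)
  have hz1 : ‖z‖ < 1 := by simpa using hz
  set b : ℂ := Complex.tan ((k:ℂ) * h z) with hb
  have hb1 : ‖b‖ < 1 := htan _ (hM z hz)
  have hmobz : ∀ w ∈ ball (0:ℂ) 1, mob z w ∈ ball (0:ℂ) 1 := by
    intro w hw
    simpa using mob_norm_lt hz1 (by simpa using hw)
  have hder : ∀ w ∈ ball (0:ℂ) 1, HasDerivAt (fun w => mob b (Complex.tan ((k:ℂ) * h (mob z w))))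
      (-((1 - ‖b‖ ^ 2 : ℝ) : ℂ) / (1 - (starRingEnd ℂ) b * Complex.tan ((k:ℂ) * h (mob z w))) ^ 2 *
        ((1 / Complex.cos ((k:ℂ) * h (mob z w)) ^ 2) * ((k:ℂ) * (deriv h (mob z w) *
        (-((1 - ‖z‖ ^ 2 : ℝ) : ℂ) / (1 - (starRingEnd ℂ) z * w) ^ 2))))) w := by
    intro w hw
    have hw1 : ‖w‖ < 1 := by simpa using hw
    have hm := hmobz w hw
    have d1 := mob_hasDerivAt hz1 hw1
    have d2 : HasDerivAt h (deriv h (mob z w)) (mob z w) :=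
      (hh.differentiableAt (isOpen_ball.mem_nhds hm)).hasDerivAt
    have d3 := (d2.comp w d1).const_mul (k:ℂ)
    have d4 := (Complex.hasDerivAt_tan (hcne _ (hM _ hm))).comp w d3
    exact (mob_hasDerivAt hb1 (htan _ (hM _ hm))).comp w d4
  have hmz0 : mob z 0 = z := by simp [mob]
  have h0 : mob b (Complex.tan ((k:ℂ) * h (mob z 0))) = 0 := by
    rw [hmz0, ← hb, mob, sub_self, zero_div]
  have hS := Complex.norm_deriv_le_one_of_mapsTo_ball (R := 1) (c := 0)
    (f := fun w => mob b (Complex.tan ((k:ℂ) * h (mob z w))))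
    (fun w hw => (hder w hw).differentiableAt.differentiableWithinAt)
    (by
      intro w hw
      simp only [h0]
      have := mob_norm_lt hb1 (htan _ (hM _ (hmobz w hw)))
      simpa using this.le) one_pos
  rw [(hder 0 (by simp)).deriv, hmz0, ← hb, one_sub_conj_mul_self] at hS
  have hbp := one_sub_sq_pos hb1
  have hzp := one_sub_sq_pos hz1
  set c := Complex.cos ((k:ℂ) * h z) with hc
  have hcp : 0 < ‖c‖ := norm_pos_iff.mpr (hcne _ (hM z hz))
  have hcb : ‖c‖ ^ 2 * (1 - ‖b‖ ^ 2) ≤ 1 := by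
    have : ‖b‖ = ‖Complex.sin ((k:ℂ) * h z)‖ / ‖c‖ := by rw [hb, Complex.tan, norm_div]
    have h5 : ‖c‖ ^ 2 * (1 - ‖b‖ ^ 2) = ‖c‖ ^ 2 - ‖Complex.sin ((k:ℂ) * h z)‖ ^ 2 := by
      rw [this]; field_simp
    rw [h5, hc, cos_sub_sin]
    exact Real.cos_le_one _
  simp only [norm_mul, norm_div, norm_neg, norm_pow, Complex.norm_real, Real.norm_eq_abs,
    abs_of_pos hbp, abs_of_pos hzp, abs_of_pos hkpos, mul_zero, sub_zero, norm_one, one_pow, div_one] at hS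
  have h6 : (1 - ‖b‖ ^ 2) / (1 - ‖b‖ ^ 2) ^ 2 * (1 / ‖c‖ ^ 2 * (k * (‖deriv h z‖ * (1 - ‖z‖ ^ 2))))
      = (k * (‖deriv h z‖ * (1 - ‖z‖ ^ 2))) / (‖c‖ ^ 2 * (1 - ‖b‖ ^ 2)) := by
    field_simp
  rw [h6, div_le_one (by positivity)] at hS
  have h7 : k * (‖deriv h z‖ * (1 - ‖z‖ ^ 2)) ≤ 1 := hS.trans hcb
  have h8 : 4 * M / Real.pi * (1 / (1 - ‖z‖ ^ 2)) = 1 / (k * (1 - ‖z‖ ^ 2)) := by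
    rw [hk]; field_simp
  rw [h8, le_div_iff₀ (by positivity)]
  linarith

lemma circleMap01 (t : ℝ) : circleMap 0 1 t = Complex.exp (Complex.I * (t:ℂ)) := by
  simp [circleMap, mul_comm]

lemma norm_exp_I (t : ℝ) : ‖Complex.exp (Complex.I * (t:ℂ))‖ = 1 := by
  rw [mul_comm]; exact Complex.norm_exp_ofReal_mul_I t

lemma poisson_eq (ψ : ℂ → ℂ) (z : ℂ) :
    poissonIntegral ψ z =
      Real.circleAverage (fun ζ => ((herglotzRieszKernel 0 z ζ).re : ℂ) * ψ ζ) 0 1 := by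
  rw [poissonIntegral, Real.circleAverage_def, one_div]
  congr 1
  apply intervalIntegral.integral_congr
  intro t _
  simp only
  rw [circleMap01]
  have h := congrFun (poissonKernel_eq_re_herglotzRieszKernel (c := 0) (w := z))
    (Complex.exp (Complex.I * (t:ℂ)))
  simp only [Function.comp] at h
  rw [← h, poissonKernel_def]
  simp only [sub_zero, norm_exp_I, one_pow]
  have h2 : ‖1 - z * Complex.exp (-(Complex.I * (t : ℂ)))‖ = ‖Complex.exp (Complex.I * (t:ℂ)) - z‖ := by
    have : Complex.exp (Complex.I * (t:ℂ)) - z =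
      Complex.exp (Complex.I * (t:ℂ)) * (1 - z * Complex.exp (-(Complex.I * (t : ℂ)))) := by
      rw [Complex.exp_neg]
      field_simp
    rw [this, norm_mul, norm_exp_I, one_mul]
  rw [h2]

lemma circleInt_of {ψ : ℂ → ℂ}
    (hψint : IntervalIntegrable (fun t : ℝ => ψ (Complex.exp (Complex.I * (t : ℂ))))
      MeasureTheory.volume 0 (2 * Real.pi)) : CircleIntegrable ψ 0 1 := by
  unfold CircleIntegrable
  simpa only [circleMap01] using hψint

lemma kernel_cont {z : ℂ} (hz : z ∈ ball (0:ℂ) 1) :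
    Continuous (fun t : ℝ => herglotzRieszKernel 0 z (circleMap 0 1 t)) := by
  have := continuousOn_herglotzRieszKernel_sphere (c := 0) (R := 1) hz
  apply this.comp_continuous (by fun_prop)
  intro t
  exact circleMap_mem_sphere' 0 1 t

lemma re_poisson {ψ : ℂ → ℂ} (hψ : CircleIntegrable ψ 0 1) (α : ℂ) {z : ℂ} (hz : z ∈ ball (0:ℂ) 1) :
    (α * poissonIntegral ψ z).re = Real.circleAverage
      ((Complex.re ∘ herglotzRieszKernel 0 z) • (fun ζ => (α * ψ ζ).re)) 0 1 := by
  rw [poisson_eq]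
  have hint : CircleIntegrable (fun ζ => ((herglotzRieszKernel 0 z ζ).re : ℂ) * ψ ζ) 0 1 := by
    unfold CircleIntegrable at *
    apply IntervalIntegrable.continuousOn_mul hψ
    exact (Complex.continuous_ofReal.comp (Complex.continuous_re.comp (kernel_cont hz))).continuousOn
  have := (Complex.reCLM.comp ((ContinuousLinearMap.mul ℝ ℂ) α)).circleAverage_comp_comm hint
  simp only [ContinuousLinearMap.comp_apply, Complex.reCLM_apply, ContinuousLinearMap.mul_apply'] at this
  rw [← this]
  congr 1
  ext ζ
  simp
  ring

lemma re_circleInt {ψ : ℂ → ℂ} (hψ : CircleIntegrable ψ 0 1) (α : ℂ) :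
    CircleIntegrable (fun ζ => (α * ψ ζ).re) 0 1 := by
  unfold CircleIntegrable at *
  have h1 := hψ.const_mul α
  exact ⟨h1.1.re, h1.2.re⟩

lemma exists_H {ψ : ℂ → ℂ} (hψ : CircleIntegrable ψ 0 1) (α : ℂ) :
    ∃ H : ℂ → ℂ, DifferentiableOn ℂ H (ball 0 1) ∧
      ∀ z ∈ ball (0:ℂ) 1, (α * poissonIntegral ψ z).re = (H z).re := by
  have hu := re_circleInt hψ α
  refine ⟨fun w => Real.circleAverage
    (fun ζ ↦ herglotzRieszKernel 0 w ζ • (((α * ψ ζ).re : ℝ) : ℂ)) 0 1, ?_, ?_⟩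
  · apply differentiableOn_circleAverage_herglotzRieszKernel_smul
    unfold CircleIntegrable at *
    exact ⟨hu.1.ofReal, hu.2.ofReal⟩
  · intro z hz
    rw [re_poisson hψ α hz]
    exact (re_circleAverage_herglotzRieszKernel_smul hu hz).symm

lemma kernel_avg {z : ℂ} (hz : z ∈ ball (0:ℂ) 1) (C : ℝ) :
    Real.circleAverage ((Complex.re ∘ herglotzRieszKernel 0 z) • (fun _ => C)) 0 1 = C := by
  have h1 := re_poisson (ψ := fun _ => (C:ℂ)) (by simp) 1 hz
  have h2 := DiffContOnCl.circleAverage_re_herglotzRieszKernel_smul (f := fun _ => (C:ℂ)) (c := 0) (R := 1) 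
    diffContOnCl_const hz
  simp only [one_mul, Complex.ofReal_re] at h1
  rw [← h1, poisson_eq]
  have h3 : (fun ζ => ((herglotzRieszKernel 0 z ζ).re : ℂ) * (C:ℂ)) =
    ((Complex.re ∘ herglotzRieszKernel 0 z) • fun _ => (C:ℂ)) := by
    ext ζ; simp
  rw [h3, h2, Complex.ofReal_re]

lemma poisson_bdd {ψ : ℂ → ℂ} (hψ : CircleIntegrable ψ 0 1) {C : ℝ}
    (hC : ∀ ζ ∈ sphere (0:ℂ) 1, ‖ψ ζ‖ ≤ C) {z : ℂ} (hz : z ∈ ball (0:ℂ) 1) :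
    ‖poissonIntegral ψ z‖ ≤ C := by
  obtain ⟨α, hα, hα2⟩ : ∃ α : ℂ, ‖α‖ ≤ 1 ∧ (α * poissonIntegral ψ z).re = ‖poissonIntegral ψ z‖ := by
    by_cases h0 : poissonIntegral ψ z = 0
    · exact ⟨0, by simp, by simp [h0]⟩
    · have hp : ‖poissonIntegral ψ z‖ ≠ 0 := norm_ne_zero_iff.mpr h0
      refine ⟨(starRingEnd ℂ) (poissonIntegral ψ z) / ‖poissonIntegral ψ z‖, ?_, ?_⟩
      · simp [hp]
      · rw [div_mul_eq_mul_div, Complex.conj_mul', pow_two, mul_div_assoc, div_self (by exact_mod_cast hp)]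
        simp
  rw [← hα2, re_poisson hψ α hz, ← kernel_avg hz C]
  have hk : Continuous (fun t : ℝ => (herglotzRieszKernel 0 z (circleMap 0 1 t)).re) :=
    Complex.continuous_re.comp (kernel_cont hz)
  apply Real.circleAverage_mono
  · have hu := re_circleInt hψ α
    unfold CircleIntegrable at *
    exact hu.continuousOn_mul hk.continuousOn
  · unfold CircleIntegrable
    exact (hk.mul continuous_const).intervalIntegrable _ _
  · intro ζ hζ
    rw [abs_one] at hζ
    simp only [Pi.smul_apply', Function.comp, smul_eq_mul]
    have hzn : ‖z‖ < 1 := by simpa using hz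
    have h1 := le_re_herglotzRieszKernel hζ hz
    have h2 : 0 ≤ (herglotzRieszKernel 0 z ζ).re := by
      refine le_trans ?_ h1
      simp only [sub_zero]
      have := norm_nonneg z
      apply div_nonneg <;> linarith
    apply mul_le_mul_of_nonneg_left _ h2
    calc (α * ψ ζ).re ≤ ‖α * ψ ζ‖ := Complex.re_le_norm _
      _ ≤ 1 * C := by
        rw [norm_mul]
        exact mul_le_mul hα (hC ζ hζ) (norm_nonneg _) zero_le_one
      _ = C := one_mul _

lemma poisson_le_sup {ψ : ℂ → ℂ} (hψ : CircleIntegrable ψ 0 1)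
    (hψbdd : ∃ C : ℝ, ∀ ζ ∈ sphere (0:ℂ) 1, ‖ψ ζ‖ ≤ C) {z : ℂ} (hz : z ∈ ball (0:ℂ) 1) :
    ‖poissonIntegral ψ z‖ ≤ supD (poissonIntegral ψ) := by
  obtain ⟨C, hC⟩ := hψbdd
  apply le_csSup
  · refine ⟨C, ?_⟩
    rintro _ ⟨w, hw, rfl⟩
    exact poisson_bdd hψ hC hw
  · exact ⟨z, hz, rfl⟩

lemma supD_nonneg (g : ℂ → ℂ) : 0 ≤ supD g := by
  apply Real.sSup_nonneg
  rintro _ ⟨w, _, rfl⟩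
  exact norm_nonneg _

lemma re_fderiv {H : ℂ → ℂ} {z : ℂ} (h : DifferentiableAt ℂ H z) :
    HasFDerivAt (fun z => (H z).re) (Complex.reCLM.comp
      ((ContinuousLinearMap.toSpanSingleton ℂ (deriv H z)).restrictScalars ℝ)) z :=
  Complex.reCLM.hasFDerivAt.comp z (h.hasDerivAt.hasFDerivAt.restrictScalars ℝ)

lemma poisson_diff {ψ : ℂ → ℂ} (hψ : CircleIntegrable ψ 0 1) {z : ℂ} (hz : z ∈ ball (0:ℂ) 1) :
    DifferentiableAt ℝ (poissonIntegral ψ) z := by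
  obtain ⟨H1, hd1, h1⟩ := exists_H hψ 1
  obtain ⟨H2, hd2, h2⟩ := exists_H hψ (-Complex.I)
  have hn := isOpen_ball.mem_nhds hz
  have e : poissonIntegral ψ =ᶠ[nhds z] fun w => ((H1 w).re : ℂ) + ((H2 w).re : ℂ) * Complex.I := by
    filter_upwards [hn] with w hw
    rw [← h1 w hw, ← h2 w hw]
    apply Complex.ext <;> simp
  refine DifferentiableAt.congr_of_eventuallyEq ?_ e
  have a1 := (re_fderiv (hd1.differentiableAt hn)).differentiableAt
  have a2 := (re_fderiv (hd2.differentiableAt hn)).differentiableAt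
  exact (Complex.ofRealCLM.differentiableAt.comp z a1).add
    ((Complex.ofRealCLM.differentiableAt.comp z a2).mul_const _)

lemma exists_unit (x : ℂ) : ∃ α : ℂ, ‖α‖ = 1 ∧ α * x = ‖x‖ := by
  by_cases h0 : x = 0
  · exact ⟨1, by simp, by simp [h0]⟩
  · have hp : ‖x‖ ≠ 0 := norm_ne_zero_iff.mpr h0
    refine ⟨(starRingEnd ℂ) x / ‖x‖, ?_, ?_⟩
    · simp [hp]
    · rw [div_mul_eq_mul_div, Complex.conj_mul', pow_two, mul_div_assoc, div_self (by exact_mod_cast hp)]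
      simp

lemma poisson_fderiv_bound {ψ : ℂ → ℂ} (hψ : CircleIntegrable ψ 0 1)
    (hψbdd : ∃ C : ℝ, ∀ ζ ∈ sphere (0:ℂ) 1, ‖ψ ζ‖ ≤ C) {z : ℂ} (hz : z ∈ ball (0:ℂ) 1)
    {v : ℂ} (hv : ‖v‖ = 1) :
    ‖fderiv ℝ (poissonIntegral ψ) z v‖ ≤
      4 * supD (poissonIntegral ψ) / Real.pi * (1 / (1 - ‖z‖ ^ 2)) := by
  obtain ⟨α, hα, hα2⟩ := exists_unit (fderiv ℝ (poissonIntegral ψ) z v)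
  obtain ⟨H, hd, hH⟩ := exists_H hψ α
  have hn := isOpen_ball.mem_nhds hz
  have hb : ‖deriv H z‖ ≤ 4 * supD (poissonIntegral ψ) / Real.pi * (1 / (1 - ‖z‖ ^ 2)) := by
    apply le_of_forall_pos_le_add
    intro ε hε
    have hzp : 0 < 1 - ‖z‖ ^ 2 := one_sub_sq_pos (by simpa using hz)
    set δ := ε * Real.pi * (1 - ‖z‖ ^ 2) / 4 with hδ
    have hδp : 0 < δ := by have := Real.pi_pos; positivity
    have := strip_bound (M := supD (poissonIntegral ψ) + δ) hd (by
      intro w hw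
      rw [← hH w hw]
      calc _ ≤ ‖α * poissonIntegral ψ w‖ := Complex.abs_re_le_norm _
        _ = ‖poissonIntegral ψ w‖ := by rw [norm_mul, hα, one_mul]
        _ < _ := by linarith [poisson_le_sup hψ hψbdd hw]) hz
    refine this.trans_eq ?_
    rw [hδ]
    have := Real.pi_pos
    field_simp
  refine le_trans ?_ hb
  have e1 : HasFDerivAt (fun w => (α * poissonIntegral ψ w).re)
      ((Complex.reCLM.comp ((ContinuousLinearMap.mul ℝ ℂ) α)).comp (fderiv ℝ (poissonIntegral ψ) z)) z :=
    (Complex.reCLM.comp ((ContinuousLinearMap.mul ℝ ℂ) α)).hasFDerivAt.comp z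
      (poisson_diff hψ hz).hasFDerivAt
  have e2 := (re_fderiv (hd.differentiableAt hn)).congr_of_eventuallyEq
    (f₁ := fun w => (α * poissonIntegral ψ w).re) (by
      filter_upwards [hn] with w hw
      exact hH w hw)
  have e3 := congrArg (fun L => L v) (e1.unique e2)
  simp only [ContinuousLinearMap.comp_apply, ContinuousLinearMap.mul_apply', hα2, Complex.reCLM_apply,
    Complex.ofReal_re] at e3
  rw [e3]
  refine (Complex.re_le_norm _).trans ?_
  simp [hv]

lemma norm_circ_sub (c : ℂ) (t : ℝ) :
    ‖circleMap 0 1 t - c‖ = ‖1 - (starRingEnd ℂ) c * circleMap 0 1 t‖ := by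
  have h := mob_den_sub c (circleMap 0 1 t)
  have h1 : ‖circleMap 0 1 t‖ = 1 := by rw [circleMap01, norm_exp_I]
  rw [h1] at h
  have h2 : ‖1 - (starRingEnd ℂ) c * circleMap 0 1 t‖ ^ 2 = ‖c - circleMap 0 1 t‖ ^ 2 := by linarith
  rw [norm_sub_rev]
  exact (pow_left_injective₀ h2).symm
where
  pow_left_injective₀ {x y : ℂ} (h : ‖x‖ ^ 2 = ‖y‖ ^ 2) : ‖x‖ = ‖y‖ :=
    (pow_left_inj₀ (norm_nonneg _) (norm_nonneg _) two_ne_zero).mp h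

lemma den_ne' {c w : ℂ} (hc : ‖c‖ < 1) (hw : ‖w‖ ≤ 1) : 1 - (starRingEnd ℂ) c * w ≠ 0 := by
  intro h
  have h1 : (starRingEnd ℂ) c * w = 1 := (sub_eq_zero.mp h).symm
  have h2 : ‖c‖ * ‖w‖ = 1 := by
    have := congrArg norm h1
    simpa using this
  nlinarith [norm_nonneg c, norm_nonneg w]

lemma ang_cont {c : ℂ} (hc : ‖c‖ < 1) :
    Continuous (fun t : ℝ => 1 / ‖1 - (starRingEnd ℂ) c * circleMap 0 1 t‖ ^ 4) := by
  apply Continuous.div continuous_const (by fun_prop)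
  intro t
  have := den_ne' hc (w := circleMap 0 1 t) (by rw [circleMap01, norm_exp_I])
  positivity

lemma ang_int {c : ℂ} (hc : ‖c‖ < 1) :
    ∫ t in (-Real.pi)..Real.pi, 1 / ‖1 - (starRingEnd ℂ) c * circleMap 0 1 t‖ ^ 4 =
      2 * Real.pi * (1 + ‖c‖ ^ 2) / (1 - ‖c‖ ^ 2) ^ 3 := by
  have hcb : c ∈ ball (0:ℂ) 1 := by simpa using hc
  have hcp := one_sub_sq_pos hc
  have hpi := Real.pi_pos
  have hper : Function.Periodic (fun t : ℝ => 1 / ‖1 - (starRingEnd ℂ) c * circleMap 0 1 t‖ ^ 4)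
      (2 * Real.pi) := by
    intro t
    simp only [periodic_circleMap 0 1 t]
  have hs := hper.intervalIntegral_add_eq (-Real.pi) 0
  rw [show -Real.pi + 2 * Real.pi = Real.pi by ring, zero_add] at hs
  rw [hs]
  have hD : DiffContOnCl ℂ (fun ζ => (1 + (starRingEnd ℂ) c * ζ) / (1 - (starRingEnd ℂ) c * ζ)) (ball 0 1) := by
    apply DifferentiableOn.diffContOnCl
    rw [closure_ball _ one_ne_zero]
    intro w hw
    have := den_ne' hc (w := w) (by simpa using hw)
    apply DifferentiableAt.differentiableWithinAt
    fun_prop (disch := exact this)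
  have h1 := hD.circleAverage_poissonKernel_smul hcb
  have hcontf : Continuous (fun t : ℝ => (1 + (starRingEnd ℂ) c * circleMap 0 1 t) / (1 - (starRingEnd ℂ) c * circleMap 0 1 t)) := by
    apply Continuous.div (by fun_prop) (by fun_prop)
    intro t
    exact den_ne' hc (by rw [circleMap01, norm_exp_I])
  have hint : CircleIntegrable (poissonKernel 0 c • fun ζ => (1 + (starRingEnd ℂ) c * ζ) / (1 - (starRingEnd ℂ) c * ζ)) 0 1 := by
    unfold CircleIntegrable
    apply Continuous.intervalIntegrable
    rw [poissonKernel_eq_re_herglotzRieszKernel]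
    exact (Complex.continuous_re.comp (kernel_cont hcb)).smul hcontf
  have h2 := Complex.reCLM.circleAverage_comp_comm hint
  rw [h1, Real.circleAverage_def] at h2
  have h3 : ∀ t : ℝ, (Complex.reCLM ∘ (poissonKernel 0 c • fun ζ => (1 + (starRingEnd ℂ) c * ζ) / (1 - (starRingEnd ℂ) c * ζ))) (circleMap 0 1 t)
      = (1 - ‖c‖ ^ 2) ^ 2 * (1 / ‖1 - (starRingEnd ℂ) c * circleMap 0 1 t‖ ^ 4) := by
    intro t
    have h1 : ‖circleMap 0 1 t‖ = 1 := by rw [circleMap01, norm_exp_I]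
    have hr : ((1 + (starRingEnd ℂ) c * circleMap 0 1 t) / (1 - (starRingEnd ℂ) c * circleMap 0 1 t)).re
        = (1 - ‖c‖ ^ 2) / ‖1 - (starRingEnd ℂ) c * circleMap 0 1 t‖ ^ 2 := by
      have := congrFun (poissonKernel_eq_re_herglotzRieszKernel (c := 0) (w := (starRingEnd ℂ) c * circleMap 0 1 t)) 1
      simp only [Function.comp, herglotzRieszKernel_def, poissonKernel_def, sub_zero] at this
      rw [← this]
      simp [h1]
    simp only [Function.comp, Pi.smul_apply', Complex.reCLM_apply, Complex.smul_re, hr, poissonKernel_def, sub_zero, h1, norm_circ_sub, smul_eq_mul]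
    ring
  simp only [h3, intervalIntegral.integral_const_mul] at h2
  have h4 : Complex.reCLM ((1 + (starRingEnd ℂ) c * c) / (1 - (starRingEnd ℂ) c * c)) = (1 + ‖c‖ ^ 2) / (1 - ‖c‖ ^ 2) := by
    have : (1 + (starRingEnd ℂ) c * c) / (1 - (starRingEnd ℂ) c * c) = (((1 + ‖c‖ ^ 2) / (1 - ‖c‖ ^ 2) : ℝ) : ℂ) := by
      rw [Complex.conj_mul']; push_cast; rfl
    rw [this]; exact Complex.ofReal_re _
  rw [h4, smul_eq_mul] at h2
  generalize (∫ t in (0:ℝ)..(2 * Real.pi), 1 / ‖1 - (starRingEnd ℂ) c * circleMap 0 1 t‖ ^ 4) = X at h2 ⊢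
  field_simp at h2 ⊢
  linarith

lemma radial_deriv {r : ℝ} (hr0 : 0 < r) (hr1 : r < 1) {x : ℝ} (hx0 : 0 ≤ x) (hx1 : x ≤ 1) :
    HasDerivAt (fun x : ℝ => ((1 + 3 * r ^ 2) / (4 * r ^ 2) * x - (3 + r ^ 2) / 4 * x ^ 3) / (1 - r ^ 2 * x ^ 2) ^ 2
      - (1 - r ^ 2) / (8 * r ^ 3) * (Real.log (1 + r * x) - Real.log (1 - r * x)))
      ((1 - x ^ 2) * (1 + r ^ 2 * x ^ 2) / (1 - r ^ 2 * x ^ 2) ^ 3) x := by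
  have hrx : r * x < 1 := by nlinarith
  have p1 : 0 < 1 + r * x := by positivity
  have p2 : 0 < 1 - r * x := by linarith
  have p3 : 0 < 1 - r ^ 2 * x ^ 2 := by nlinarith
  have d0 := hasDerivAt_id' x
  have n1 := (d0.const_mul ((1 + 3 * r ^ 2) / (4 * r ^ 2))).sub ((d0.pow 3).const_mul ((3 + r ^ 2) / 4))
  have n2 := (((d0.pow 2).const_mul (r ^ 2)).const_sub 1).pow 2
  have n3 := ((d0.const_mul r).const_add 1).log p1.ne'
  have n4 := ((d0.const_mul r).const_sub 1).log p2.ne'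
  have n5 := (n1.div n2 (pow_ne_zero 2 p3.ne')).sub ((n3.sub n4).const_mul ((1 - r ^ 2) / (8 * r ^ 3)))
  convert! n5 using 1
  have e : 1 - r ^ 2 * x ^ 2 = (1 + r * x) * (1 - r * x) := by ring
  have q1 := p1.ne'
  have q2 := p2.ne'
  simp only [Pi.pow_apply, Pi.sub_apply, e]
  clear n1 n2 n3 n4 n5 e
  generalize hA : 1 + r * x = A at q1 ⊢
  generalize hB : 1 - r * x = B at q2 ⊢
  field_simp
  push_cast
  rw [← hA, ← hB]
  ring

lemma radial_int {r : ℝ} (hr0 : 0 < r) (hr1 : r < 1) :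
    IntervalIntegrable (fun x : ℝ => (1 - x ^ 2) * (1 + r ^ 2 * x ^ 2) / (1 - r ^ 2 * x ^ 2) ^ 3) volume 0 1 ∧
    2 * Real.pi * (1 - r ^ 2) * ∫ x in (0:ℝ)..1, (1 - x ^ 2) * (1 + r ^ 2 * x ^ 2) / (1 - r ^ 2 * x ^ 2) ^ 3 =
      4 * Real.pi * mu 1 r := by
  have hi : IntervalIntegrable (fun x : ℝ => (1 - x ^ 2) * (1 + r ^ 2 * x ^ 2) / (1 - r ^ 2 * x ^ 2) ^ 3) volume 0 1 := by
    apply ContinuousOn.intervalIntegrable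
    rw [uIcc_of_le zero_le_one]
    apply ContinuousOn.div (by fun_prop) (by fun_prop)
    intro x hx
    have : 0 < 1 - r ^ 2 * x ^ 2 := by
      have hrx : r * x < 1 := by nlinarith [hx.1, hx.2]
      have : 0 ≤ r * x := mul_nonneg hr0.le hx.1
      nlinarith
    positivity
  refine ⟨hi, ?_⟩
  rw [intervalIntegral.integral_eq_sub_of_hasDerivAt (fun x hx => by
    rw [uIcc_of_le zero_le_one] at hx
    exact radial_deriv hr0 hr1 hx.1 hx.2) hi]
  have p1 : 0 < 1 - r := by linarith
  have p2 : 0 < 1 + r := by linarith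
  rw [mu, Real.log_div p2.ne' p1.ne']
  simp only [mul_one, mul_zero, add_zero, sub_zero, Real.log_one, one_pow]
  have e : 1 - r ^ 2 = (1 + r) * (1 - r) := by ring
  simp only [e]
  field_simp
  ring

def kap (z w : ℂ) : ℝ := (1 - ‖w‖ ^ 2) / (‖1 - (starRingEnd ℂ) z * w‖ * ‖z - w‖)

lemma kap_meas : Measurable (fun p : ℂ × ℂ => kap p.1 p.2) := by
  unfold kap
  apply Measurable.div (by fun_prop)
  apply Measurable.mul <;> apply Continuous.measurable
  · exact (continuous_const.sub ((Complex.continuous_conj.comp continuous_fst).mul continuous_snd)).norm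
  · fun_prop

lemma sub_mob {a w : ℂ} (ha : ‖a‖ < 1) (hw : ‖w‖ < 1) :
    a - mob a w = w * ((1 - ‖a‖ ^ 2 : ℝ) : ℂ) / (1 - (starRingEnd ℂ) a * w) := by
  have hd := mob_den_ne ha hw
  rw [mob, ← one_sub_conj_mul_self, eq_div_iff hd, sub_mul, div_mul_cancel₀ _ hd]
  ring

lemma kap_mob {z a : ℂ} (hz : ‖z‖ < 1) (ha : ‖a‖ < 1) :
    kap z (mob z a) = (1 - ‖a‖ ^ 2) / (‖a‖ * (1 - ‖z‖ ^ 2)) := by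
  have hd : 0 < ‖1 - (starRingEnd ℂ) z * a‖ := norm_pos_iff.mpr (mob_den_ne hz ha)
  have hzp := one_sub_sq_pos hz
  have h1 : 1 - ‖mob z a‖ ^ 2 = (1 - ‖z‖ ^ 2) * (1 - ‖a‖ ^ 2) / ‖1 - (starRingEnd ℂ) z * a‖ ^ 2 := by
    rw [← mob_den_sub, mob, norm_div, div_pow, sub_div, div_self (pow_ne_zero 2 hd.ne')]
  rw [kap, h1, mob_den_mob hz ha, sub_mob hz ha]
  simp only [norm_div, norm_mul, Complex.norm_real, Real.norm_eq_abs, abs_of_pos hzp]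
  rcases eq_or_ne a 0 with rfl | h0
  · simp
  · have : 0 < ‖a‖ := norm_pos_iff.mpr h0
    field_simp

lemma mob_image {z : ℂ} (hz : ‖z‖ < 1) : mob z '' ball 0 1 = ball 0 1 := by
  ext w
  constructor
  · rintro ⟨a, ha, rfl⟩
    simpa using mob_norm_lt hz (by simpa using ha)
  · intro hw
    have hw1 : ‖w‖ < 1 := by simpa using hw
    exact ⟨mob z w, by simpa using mob_norm_lt hz hw1, mob_invol hz hw1⟩

lemma J_step1 {z : ℂ} (hz : ‖z‖ < 1) :
    ∫⁻ w in ball (0:ℂ) 1, ENNReal.ofReal (kap z w) =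
    ∫⁻ a in ball (0:ℂ) 1, ENNReal.ofReal
      ((1 - ‖z‖ ^ 2) * (1 - ‖a‖ ^ 2) / ‖a‖ * (1 / ‖1 - (starRingEnd ℂ) z * a‖ ^ 4)) := by
  have hzp := one_sub_sq_pos hz
  have h := lintegral_image_eq_lintegral_abs_det_fderiv_mul volume (measurableSet_ball (x := (0:ℂ)) (ε := 1))
    (f := mob z) (f' := fun w => ((ContinuousLinearMap.toSpanSingleton ℂ
      (-((1 - ‖z‖ ^ 2 : ℝ) : ℂ) / (1 - (starRingEnd ℂ) z * w) ^ 2)).restrictScalars ℝ))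
    (fun w hw => ((mob_hasDerivAt hz (by simpa using hw)).hasFDerivAt.restrictScalars ℝ).hasFDerivWithinAt)
    (fun a ha b hb hab => by
      rw [← mob_invol hz (w := a) (by simpa using ha), hab, mob_invol hz (by simpa using hb)])
    (fun w => ENNReal.ofReal (kap z w))
  rw [mob_image hz] at h
  rw [h]
  apply setLIntegral_congr_fun measurableSet_ball
  intro a ha
  have ha1 : ‖a‖ < 1 := by simpa using ha
  have hd : 0 < ‖1 - (starRingEnd ℂ) z * a‖ := norm_pos_iff.mpr (mob_den_ne hz ha1)
  simp only
  rw [kap_mob hz ha1, ← ENNReal.ofReal_mul (abs_nonneg _)]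
  congr 1
  have hdet : ∀ c : ℂ, (((ContinuousLinearMap.toSpanSingleton ℂ c).restrictScalars ℝ) : ℂ →L[ℝ] ℂ).det = ‖c‖ ^ 2 := by
    intro c
    simp [ContinuousLinearMap.det, LinearMap.det_restrictScalars,
      Algebra.norm_complex_eq, Complex.normSq_eq_norm_sq]
  rw [hdet, abs_of_nonneg (by positivity)]
  simp only [norm_div, norm_neg, norm_pow, Complex.norm_real, Real.norm_eq_abs, abs_of_pos hzp]
  rcases eq_or_ne a 0 with rfl | h0
  · simp
  · have : 0 < ‖a‖ := norm_pos_iff.mpr h0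
    field_simp

lemma J_eq {z : ℂ} (hz : ‖z‖ < 1) (hz0 : z ≠ 0) :
    ∫⁻ w in ball (0:ℂ) 1, ENNReal.ofReal (kap z w) = ENNReal.ofReal (4 * Real.pi * mu 1 ‖z‖) := by
  have hzp := one_sub_sq_pos hz
  have hr0 : 0 < ‖z‖ := norm_pos_iff.mpr hz0
  rw [J_step1 hz, ← lintegral_indicator measurableSet_ball, ← Complex.lintegral_comp_polarCoord_symm]
  have e1 : ∀ p ∈ polarCoord.target, ENNReal.ofReal p.1 • (ball (0:ℂ) 1).indicator (fun a => ENNReal.ofReal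
      ((1 - ‖z‖ ^ 2) * (1 - ‖a‖ ^ 2) / ‖a‖ * (1 / ‖1 - (starRingEnd ℂ) z * a‖ ^ 4)))
        (Complex.polarCoord.symm p) =
      (Ioo (0:ℝ) 1).indicator (fun ρ => ENNReal.ofReal ((1 - ‖z‖ ^ 2) * (1 - ρ ^ 2))) p.1 * 
        ENNReal.ofReal (1 / ‖1 - (starRingEnd ℂ) (z * p.1) * circleMap 0 1 p.2‖ ^ 4) := by
    intro p hp
    have hp1 : 0 < p.1 := hp.1
    have hn : ‖Complex.polarCoord.symm p‖ = p.1 := by rw [Complex.norm_polarCoord_symm, abs_of_pos hp1]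
    by_cases h1 : p.1 < 1
    · rw [indicator_of_mem (by rw [mem_ball_zero_iff, hn]; exact h1), indicator_of_mem (show p.1 ∈ Ioo (0:ℝ) 1 from ⟨hp1, h1⟩)]
      rw [smul_eq_mul, ← ENNReal.ofReal_mul hp1.le, ← ENNReal.ofReal_mul (by nlinarith [mul_pos hzp hp1]), hn]
      have : (starRingEnd ℂ) z * Complex.polarCoord.symm p = (starRingEnd ℂ) (z * p.1) * circleMap 0 1 p.2 := by
        rw [Complex.polarCoord_symm_apply, map_mul, Complex.conj_ofReal, circleMap]
        rw [Complex.exp_mul_I]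
        push_cast
        ring
      rw [this]
      congr 1
      field_simp
    · rw [indicator_of_notMem (by rw [mem_ball_zero_iff, hn]; exact h1), indicator_of_notMem (by simpa [hp1] using h1)]
      simp
  rw [setLIntegral_congr_fun (polarCoord.open_target.measurableSet) e1, polarCoord_target,
    Measure.volume_eq_prod, ← Measure.prod_restrict, lintegral_prod]
  swap
  · apply Measurable.aemeasurable
    apply Measurable.mul
    · exact ((Measurable.indicator (by fun_prop) measurableSet_Ioo)).comp measurable_fst
    · apply ENNReal.measurable_ofReal.comp
      apply Measurable.div measurable_const
      apply Continuous.measurable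
      have : Continuous (fun p : ℝ × ℝ => circleMap 0 1 p.2) := (continuous_circleMap 0 1).comp continuous_snd
      have h2 : Continuous (fun p : ℝ × ℝ => (starRingEnd ℂ) (z * p.1)) := 
        Complex.continuous_conj.comp (by fun_prop)
      exact ((continuous_const.sub (h2.mul this)).norm).pow 4
  have e2 : ∀ ρ ∈ Ioi (0:ℝ), ∫⁻ θ in Ioo (-Real.pi) Real.pi, 
      (Ioo (0:ℝ) 1).indicator (fun ρ => ENNReal.ofReal ((1 - ‖z‖ ^ 2) * (1 - ρ ^ 2))) ρ * 
        ENNReal.ofReal (1 / ‖1 - (starRingEnd ℂ) (z * ρ) * circleMap 0 1 θ‖ ^ 4) =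
      (Ioo (0:ℝ) 1).indicator (fun x => ENNReal.ofReal (2 * Real.pi * (1 - ‖z‖ ^ 2) * 
        ((1 - x ^ 2) * (1 + ‖z‖ ^ 2 * x ^ 2) / (1 - ‖z‖ ^ 2 * x ^ 2) ^ 3))) ρ := by
    intro ρ hρ
    have hρ0 : 0 < ρ := hρ
    by_cases h1 : ρ < 1
    · have hm : ρ ∈ Ioo (0:ℝ) 1 := ⟨hρ, h1⟩
      rw [indicator_of_mem hm, indicator_of_mem hm, lintegral_const_mul' _ _ ENNReal.ofReal_ne_top]
      have hnc : ‖z * (ρ:ℂ)‖ = ‖z‖ * ρ := by rw [norm_mul, Complex.norm_real, Real.norm_eq_abs, abs_of_pos hρ0]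
      have hc : ‖z * (ρ:ℂ)‖ < 1 := by rw [hnc]; nlinarith
      have hi := ang_int hc
      have hpi := Real.pi_pos
      rw [intervalIntegral.integral_of_le (by linarith), integral_Ioc_eq_integral_Ioo] at hi
      rw [← ofReal_integral_eq_lintegral_ofReal, hi, ← ENNReal.ofReal_mul (by nlinarith [mul_pos hzp hρ0]), hnc]
      · congr 1
        rw [mul_pow]
        ring
      · exact ((ang_cont hc).integrableOn_Icc (a := -Real.pi) (b := Real.pi)).mono_set Ioo_subset_Icc_self
      · exact Eventually.of_forall (fun _ => by positivity)
    · rw [indicator_of_notMem (by simp [hρ0, not_lt.mp h1]), indicator_of_notMem (by simp [hρ0, not_lt.mp h1])]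
      simp
  rw [setLIntegral_congr_fun measurableSet_Ioi e2, setLIntegral_indicator measurableSet_Ioo,
    inter_eq_left.mpr (fun x hx => hx.1)]
  obtain ⟨hi, hv⟩ := radial_int hr0 hz
  rw [← hv, ← intervalIntegral.integral_const_mul, intervalIntegral.integral_of_le zero_le_one, integral_Ioc_eq_integral_Ioo,
    ofReal_integral_eq_lintegral_ofReal]
  · exact ((hi.const_mul _).1).mono_set Ioo_subset_Ioc_self
  · filter_upwards [self_mem_ae_restrict measurableSet_Ioo] with x hx
    have hpi := Real.pi_pos
    have : ‖z‖ * x < 1 := by nlinarith [hx.1, hx.2]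
    have h0 : 0 ≤ ‖z‖ * x := mul_nonneg hr0.le hx.1.le
    have h1 : 0 < 1 - ‖z‖ ^ 2 * x ^ 2 := by nlinarith
    have h2 : 0 < 1 - x ^ 2 := by nlinarith [hx.1, hx.2]
    simp only [Pi.zero_apply]
    positivity

def gk (z w : ℂ) : ℝ := Real.log ‖(1 - z * (starRingEnd ℂ) w) / (z - w)‖

lemma norm_den_conj (z w : ℂ) : ‖1 - z * (starRingEnd ℂ) w‖ = ‖1 - (starRingEnd ℂ) z * w‖ := by
  rw [← Complex.norm_conj]
  simp

lemma kap_nonneg {z w : ℂ} (hw : ‖w‖ < 1) : 0 ≤ kap z w := by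
  have := one_sub_sq_pos hw
  unfold kap
  positivity

lemma gk_le_kap {z w : ℂ} (hz : ‖z‖ < 1) (hw : ‖w‖ < 1) : |gk z w| ≤ kap z w := by
  rcases eq_or_ne z w with rfl | hne
  · simp [gk, kap]
  have hN : 0 < ‖z - w‖ := norm_pos_iff.mpr (sub_ne_zero.mpr hne)
  have hD : 0 < ‖1 - (starRingEnd ℂ) z * w‖ := norm_pos_iff.mpr (mob_den_ne hz hw)
  have h := mob_den_sub z w
  have hzp := one_sub_sq_pos hz
  have hwp := one_sub_sq_pos hw
  rw [gk, kap, norm_div, norm_den_conj]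
  set D := ‖1 - (starRingEnd ℂ) z * w‖
  set N := ‖z - w‖
  have hND : N ≤ D := by
    apply le_of_sq_le_sq _ hD.le
    nlinarith [mul_pos hzp hwp]
  have h1 : 1 ≤ D / N := (one_le_div hN).mpr hND
  rw [abs_of_nonneg (Real.log_nonneg h1)]
  have h2 := Real.log_le_sub_one_of_pos (show 0 < D / N by positivity)
  have h3 : D / N - 1 ≤ (D ^ 2 - N ^ 2) / (D * N) := by
    rw [le_div_iff₀ (by positivity)]
    have : (D / N - 1) * (D * N) = D ^ 2 - D * N := by field_simp
    rw [this]
    nlinarith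
  refine h2.trans (h3.trans ?_)
  apply div_le_div_of_nonneg_right _ (by positivity)
  rw [h]
  nlinarith [sq_nonneg ‖z‖]
where
  le_of_sq_le_sq {a b : ℝ} (h : a ^ 2 ≤ b ^ 2) (hb : 0 ≤ b) : a ≤ b := (le_abs_self a).trans (abs_le_of_sq_le_sq h hb)

lemma gk_meas (z : ℂ) : Measurable (gk z) := by
  unfold gk
  apply Real.measurable_log.comp
  apply Measurable.norm
  apply Measurable.div
  · exact (continuous_const.sub (continuous_const.mul Complex.continuous_conj)).measurable
  · fun_prop

lemma g_le_sup {g : ℂ → ℂ} (hg : ContinuousOn g (closedBall (0:ℂ) 1)) {w : ℂ} (hw : w ∈ ball (0:ℂ) 1) :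
    ‖g w‖ ≤ supD g := by
  obtain ⟨C, hC⟩ := (isCompact_closedBall (0:ℂ) 1).exists_bound_of_continuousOn hg
  apply le_csSup
  · refine ⟨C, ?_⟩
    rintro _ ⟨w, hw, rfl⟩
    exact hC w (ball_subset_closedBall hw)
  · exact ⟨w, hw, rfl⟩

lemma kap_integrable {z : ℂ} (hz : ‖z‖ < 1) (hz0 : z ≠ 0) :
    IntegrableOn (kap z) (ball (0:ℂ) 1) := by
  refine ⟨(kap_meas.comp measurable_prodMk_left).aestronglyMeasurable, ?_⟩
  rw [hasFiniteIntegral_iff_ofReal, J_eq hz hz0]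
  · exact ENNReal.ofReal_lt_top
  · filter_upwards [self_mem_ae_restrict measurableSet_ball] with w hw
    exact kap_nonneg (by simpa using hw)

lemma green_integrable {g : ℂ → ℂ} (hg : ContinuousOn g (closedBall (0:ℂ) 1)) {z : ℂ}
    (hz : ‖z‖ < 1) (hz0 : z ≠ 0) :
    IntegrableOn (fun w => ((gk z w : ℝ) : ℂ) * g w) (ball (0:ℂ) 1) := by
  apply Integrable.mono' ((kap_integrable hz hz0).mul_const (supD g))
  · apply AEStronglyMeasurable.mul
    · exact (Complex.measurable_ofReal.comp (gk_meas z)).aestronglyMeasurable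
    · exact (hg.mono ball_subset_closedBall).aestronglyMeasurable measurableSet_ball
  · filter_upwards [self_mem_ae_restrict measurableSet_ball] with w hw
    rw [norm_mul, Complex.norm_real, Real.norm_eq_abs]
    have hw1 : ‖w‖ < 1 := by simpa using hw
    exact mul_le_mul (gk_le_kap hz hw1) (g_le_sup hg hw) (norm_nonneg _) (kap_nonneg hw1)

lemma log_norm_deriv {u : ℝ → ℂ} {u' : ℂ} {s : ℝ} (hu : HasDerivAt u u' s) (h0 : u s ≠ 0) :
    HasDerivAt (fun t => Real.log ‖u t‖) (u' / u s).re s := by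
  have h1 : HasDerivAt (fun t => u t / u s) (u' / u s) s := hu.div_const _
  have hsl : u s / u s ∈ Complex.slitPlane := by rw [div_self h0]; simp
  have h2 := h1.clog_real hsl
  have h3 : HasDerivAt (fun t => (Complex.log (u t / u s)).re + Real.log ‖u s‖)
      (u' / u s).re s := by
    have := (Complex.reCLM.hasFDerivAt.comp_hasDerivAt s h2).add_const (Real.log ‖u s‖)
    convert! this using 1
    simp [div_self h0]
  refine h3.congr_of_eventuallyEq ?_
  filter_upwards [hu.continuousAt.eventually_ne h0] with t ht
  rw [Complex.log_re, norm_div, Real.log_div (norm_ne_zero_iff.mpr ht) (norm_ne_zero_iff.mpr h0)]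
  ring

lemma null_line (z d : ℂ) : ∀ᵐ w : ℂ, ∀ s : ℝ, z + s * d ≠ w := by
  have h : volume ((AffineSubspace.mk' z (Submodule.span ℝ {d}) : AffineSubspace ℝ ℂ) : Set ℂ) = 0 := by
    apply Measure.addHaar_affineSubspace
    intro htop
    have h1 := congrArg AffineSubspace.direction htop
    rw [AffineSubspace.direction_mk', AffineSubspace.direction_top] at h1
    have h2 := finrank_span_le_card (R := ℝ) ({d} : Set ℂ)
    rw [h1, finrank_top, Complex.finrank_real_complex] at h2
    simp at h2
  rw [ae_iff]
  refine measure_mono_null ?_ h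
  intro w hw
  simp only [mem_setOf_eq, not_forall, not_not] at hw
  obtain ⟨s, hs⟩ := hw
  simp only [SetLike.mem_coe, AffineSubspace.mem_mk']
  rw [← hs]
  simp only [vsub_eq_sub, add_sub_cancel_left]
  rw [← Complex.real_smul]
  exact Submodule.smul_mem _ _ (Submodule.mem_span_singleton_self d)

lemma gk_seg {z d w : ℂ} (hw : ‖w‖ < 1) (hseg : ∀ s ∈ Icc (0:ℝ) 1, ‖z + s * d‖ < 1)
    (hne : ∀ s : ℝ, z + s * d ≠ w) :
    ‖gk (z + d) w - gk z w‖ₑ ≤ ∫⁻ s in Icc (0:ℝ) 1, ENNReal.ofReal (‖d‖ * kap (z + s * d) w) := by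
  have hun : ∀ s ∈ Icc (0:ℝ) 1, 1 - (z + s * d) * (starRingEnd ℂ) w ≠ 0 := by
    intro s hs
    rw [← norm_ne_zero_iff, norm_den_conj, norm_ne_zero_iff]
    exact mob_den_ne (hseg s hs) hw
  have hvn : ∀ s : ℝ, (z + s * d) - w ≠ 0 := fun s => sub_ne_zero.mpr (hne s)
  set F : ℝ → ℝ := fun s => Real.log ‖1 - (z + s * d) * (starRingEnd ℂ) w‖ - Real.log ‖(z + s * d) - w‖ with hF
  have hFg : ∀ s ∈ Icc (0:ℝ) 1, gk (z + s * d) w = F s := by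
    intro s hs
    rw [gk, norm_div, Real.log_div (norm_ne_zero_iff.mpr (hun s hs)) (norm_ne_zero_iff.mpr (hvn s))]
  have h1 := hFg 1 (by simp)
  have h0 := hFg 0 (by simp)
  simp only [Complex.ofReal_one, one_mul, Complex.ofReal_zero, zero_mul, add_zero] at h1 h0
  rw [h1, h0]
  have hof : ContDiff ℝ 1 (fun s : ℝ => (s : ℂ)) := Complex.ofRealCLM.contDiff
  have hC : ContDiffOn ℝ 1 F (Icc 0 1) := by
    apply ContDiffOn.sub
    · apply ContDiffOn.log
      · apply ContDiffOn.norm ℝ _ hun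
        exact (contDiff_const.sub ((contDiff_const.add (hof.mul contDiff_const)).mul contDiff_const)).contDiffOn
      · intro s hs
        exact norm_ne_zero_iff.mpr (hun s hs)
    · apply ContDiffOn.log
      · apply ContDiffOn.norm ℝ _ (fun s _ => hvn s)
        exact ((contDiff_const.add (hof.mul contDiff_const)).sub contDiff_const).contDiffOn
      · intro s hs
        exact norm_ne_zero_iff.mpr (hvn s)
  refine (enorm_sub_le_lintegral_deriv_of_contDiffOn_Icc hC zero_le_one).trans ?_
  apply setLIntegral_mono' measurableSet_Icc
  intro s hs
  have hp : HasDerivAt (fun s : ℝ => z + s * d) d s := by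
    simpa using ((Complex.ofRealCLM.hasDerivAt (x := s)).mul_const d).const_add z
  have d1 : HasDerivAt (fun s : ℝ => 1 - (z + s * d) * (starRingEnd ℂ) w) (-(d * (starRingEnd ℂ) w)) s :=
    (hp.mul_const _).const_sub 1
  have d2 : HasDerivAt (fun s : ℝ => (z + s * d) - w) d s := hp.sub_const w
  have hd := (log_norm_deriv d1 (hun s hs)).sub (log_norm_deriv d2 (hvn s))
  have hd' : deriv F s = _ := hd.deriv
  rw [hd', ← ofReal_norm_eq_enorm, ← Complex.sub_re]
  apply ENNReal.ofReal_le_ofReal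
  refine (Complex.abs_re_le_norm _).trans ?_
  have e : -(d * (starRingEnd ℂ) w) / (1 - (z + s * d) * (starRingEnd ℂ) w) - d / ((z + s * d) - w)
      = -(d * ((1 - ‖w‖ ^ 2 : ℝ) : ℂ)) / ((1 - (z + s * d) * (starRingEnd ℂ) w) * ((z + s * d) - w)) := by
    rw [div_sub_div _ _ (hun s hs) (hvn s), ← one_sub_conj_mul_self]
    congr 1
    ring
  rw [e, kap]
  have hwp := one_sub_sq_pos hw
  simp only [norm_div, norm_neg, norm_mul, Complex.norm_real, Real.norm_eq_abs, abs_of_pos hwp, norm_den_conj]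
  rw [mul_div_assoc]

set_option maxHeartbeats 2000000 in
lemma green_lip {g : ℂ → ℂ} (hg : ContinuousOn g (closedBall (0:ℂ) 1)) {z d : ℂ} {B : ℝ}
    (hseg : ∀ s ∈ Icc (0:ℝ) 1, ‖z + s * d‖ < 1 ∧ z + s * d ≠ 0 ∧ mu 1 ‖z + s * d‖ ≤ B) (hB : 0 ≤ B) :
    ‖greenPotential g (z + d) - greenPotential g z‖ ≤ 2 * supD g * B * ‖d‖ := by
  have hpi := Real.pi_pos
  have hS := supD_nonneg g
  have h1 := hseg 1 (by simp)
  have h0 := hseg 0 (by simp)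
  simp only [Complex.ofReal_one, one_mul, Complex.ofReal_zero, zero_mul, add_zero] at h1 h0
  have i1 := green_integrable hg h1.1 h1.2.1
  have i0 := green_integrable hg h0.1 h0.2.1
  have hG : ∀ x, greenPotential g x = (1 / (2 * Real.pi) : ℝ) • ∫ w in ball (0:ℂ) 1, ((gk x w : ℝ) : ℂ) * g w :=
    fun x => rfl
  rw [hG, hG, ← smul_sub, ← integral_sub i1 i0, norm_smul]
  have key : ‖∫ w in ball (0:ℂ) 1, (((gk (z + d) w : ℝ) : ℂ) * g w - ((gk z w : ℝ) : ℂ) * g w)‖ ≤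
      supD g * (‖d‖ * (4 * Real.pi * B)) := by
    have hnn : 0 ≤ supD g * (‖d‖ * (4 * Real.pi * B)) := by positivity
    rw [← ENNReal.ofReal_le_ofReal_iff hnn, ofReal_norm_eq_enorm]
    calc _ ≤ ∫⁻ w in ball (0:ℂ) 1, ‖((gk (z + d) w : ℝ) : ℂ) * g w - ((gk z w : ℝ) : ℂ) * g w‖ₑ :=
          enorm_integral_le_lintegral_enorm _
      _ ≤ ∫⁻ w in ball (0:ℂ) 1, ENNReal.ofReal (supD g) *
            ∫⁻ s in Icc (0:ℝ) 1, ENNReal.ofReal (‖d‖ * kap (z + s * d) w) := by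
          apply lintegral_mono_ae
          filter_upwards [self_mem_ae_restrict measurableSet_ball, ae_restrict_of_ae (null_line z d)] with w hw hne
          rw [← sub_mul, enorm_mul, mul_comm]
          apply mul_le_mul'
          · rw [← ofReal_norm_eq_enorm]
            exact ENNReal.ofReal_le_ofReal (g_le_sup hg hw)
          · rw [← Complex.ofReal_sub, ← ofReal_norm_eq_enorm, Complex.norm_real, ofReal_norm_eq_enorm]
            exact gk_seg (by simpa using hw) (fun s hs => (hseg s hs).1) hne
      _ = ENNReal.ofReal (supD g) * ∫⁻ s in Icc (0:ℝ) 1, ∫⁻ w in ball (0:ℂ) 1,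
            ENNReal.ofReal (‖d‖ * kap (z + s * d) w) := by
          rw [lintegral_const_mul' _ _ ENNReal.ofReal_ne_top, lintegral_lintegral_swap]
          apply Measurable.aemeasurable
          apply ENNReal.measurable_ofReal.comp
          apply Measurable.const_mul
          refine kap_meas.comp (Measurable.prodMk ?_ measurable_fst)
          apply Continuous.measurable
          exact continuous_const.add ((Complex.continuous_ofReal.comp continuous_snd).mul continuous_const)
      _ ≤ ENNReal.ofReal (supD g) * ∫⁻ s in Icc (0:ℝ) 1, ENNReal.ofReal (‖d‖ * (4 * Real.pi * B)) := by
          refine mul_le_mul' le_rfl ?_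
          apply setLIntegral_mono' measurableSet_Icc
          intro s hs
          obtain ⟨a1, a2, a3⟩ := hseg s hs
          simp only [ENNReal.ofReal_mul (norm_nonneg d)]
          rw [lintegral_const_mul' _ _ ENNReal.ofReal_ne_top, J_eq a1 a2, ← ENNReal.ofReal_mul (norm_nonneg d),
            ← ENNReal.ofReal_mul (norm_nonneg d)]
          apply ENNReal.ofReal_le_ofReal
          exact mul_le_mul_of_nonneg_left (mul_le_mul_of_nonneg_left a3 (by positivity)) (norm_nonneg d)
      _ = _ := by
          rw [lintegral_const, Measure.restrict_apply_univ, Real.volume_Icc, ENNReal.ofReal_mul hS]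
          simp
  rw [Real.norm_eq_abs, abs_of_pos (by positivity)]
  calc _ ≤ 1 / (2 * Real.pi) * (supD g * (‖d‖ * (4 * Real.pi * B))) :=
        mul_le_mul_of_nonneg_left key (by positivity)
    _ = _ := by field_simp; ring

lemma mu_nonneg {r : ℝ} (h0 : 0 < r) (h1 : r < 1) : 0 ≤ mu 1 r := by
  obtain ⟨hi, hv⟩ := radial_int h0 h1
  have hpi := Real.pi_pos
  have hp : 0 < 1 - r ^ 2 := by nlinarith
  have : 0 ≤ ∫ x in (0:ℝ)..1, (1 - x ^ 2) * (1 + r ^ 2 * x ^ 2) / (1 - r ^ 2 * x ^ 2) ^ 3 := by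
    apply intervalIntegral.integral_nonneg zero_le_one
    intro x hx
    have : r * x < 1 := by nlinarith [hx.1, hx.2]
    have h0 : 0 ≤ r * x := mul_nonneg h0.le hx.1
    have h1 : 0 < 1 - r ^ 2 * x ^ 2 := by nlinarith
    have h2 : 0 ≤ 1 - x ^ 2 := by nlinarith [hx.1, hx.2]
    positivity
  have h3 : 0 ≤ 4 * Real.pi * mu 1 r := by rw [← hv]; positivity
  by_contra hneg
  push Not at hneg
  nlinarith

lemma mu_cont {r : ℝ} (h0 : 0 < r) (h1 : r < 1) : ContinuousAt (mu 1) r := by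
  unfold mu
  have a1 : 8 * r ^ 2 ≠ 0 := by positivity
  have a2 : 1 - r ^ 2 ≠ 0 := by nlinarith
  have a3 : 2 * r ≠ 0 := by positivity
  have a4 : 1 - r ≠ 0 := by linarith
  have a5 : (1 + r) / (1 - r) ≠ 0 := div_ne_zero (by linarith) a4
  fun_prop (disch := assumption)

lemma mu_smul (c r : ℝ) : mu c r = c * mu 1 r := by
  unfold mu; ring

lemma green_fderiv {g : ℂ → ℂ} (hg : ContinuousOn g (closedBall (0:ℂ) 1)) {z : ℂ}
    (hz : ‖z‖ < 1) (hz0 : z ≠ 0) (hd : DifferentiableAt ℝ (greenPotential g) z) :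
    ‖fderiv ℝ (greenPotential g) z‖ ≤ 2 * mu (supD g) ‖z‖ := by
  have hS := supD_nonneg g
  have hr0 : 0 < ‖z‖ := norm_pos_iff.mpr hz0
  have hm := mu_nonneg hr0 hz
  have main : ∀ ε > 0, ‖fderiv ℝ (greenPotential g) z‖ ≤ 2 * supD g * (mu 1 ‖z‖ + ε) := by
    intro ε hε
    have hc : ContinuousAt (fun w : ℂ => mu 1 ‖w‖) z :=
      ContinuousAt.comp (f := fun w : ℂ => ‖w‖) (mu_cont hr0 hz) continuous_norm.continuousAt
    have ev : ∀ᶠ w in nhds z, ‖w‖ < 1 ∧ w ≠ 0 ∧ mu 1 ‖w‖ ≤ mu 1 ‖z‖ + ε := by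
      have e1 : ∀ᶠ w in nhds z, ‖w‖ < 1 := continuous_norm.continuousAt.eventually_lt continuousAt_const hz
      have e2 : ∀ᶠ w in nhds z, w ≠ 0 := continuousAt_id.eventually_ne hz0
      have e3 : ∀ᶠ w in nhds z, mu 1 ‖w‖ < mu 1 ‖z‖ + ε :=
        hc.eventually_lt continuousAt_const (by linarith)
      filter_upwards [e1, e2, e3] with w a b c using ⟨a, b, c.le⟩
    obtain ⟨δ, hδ, hball⟩ := Metric.eventually_nhds_iff.mp ev
    apply hd.hasFDerivAt.le_of_lip' (by positivity)
    filter_upwards [ball_mem_nhds z hδ] with w hw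
    have := green_lip hg (z := z) (d := w - z) (B := mu 1 ‖z‖ + ε) (by
      intro s hs
      apply hball
      rw [dist_eq_norm, add_sub_cancel_left, norm_mul, Complex.norm_real, Real.norm_eq_abs, abs_of_nonneg hs.1]
      rw [mem_ball, dist_eq_norm] at hw
      nlinarith [hs.1, hs.2, norm_nonneg (w - z)]) (by linarith)
    rwa [add_sub_cancel] at this
  rw [mu_smul]
  apply le_of_forall_pos_le_add
  intro ε hε
  refine (main (ε / (2 * supD g + 1)) (by positivity)).trans ?_
  have : 2 * supD g * (ε / (2 * supD g + 1)) ≤ ε := by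
    rw [← mul_div_assoc, div_le_iff₀ (by positivity)]
    nlinarith
  linarith

lemma exists_dir (L : ℂ →L[ℝ] ℂ) : ∃ v : ℂ, ‖v‖ = 1 ∧
    ‖(L 1 - Complex.I * L Complex.I) / 2‖ + ‖(L 1 + Complex.I * L Complex.I) / 2‖ = ‖L v‖ := by
  set a := (L 1 - Complex.I * L Complex.I) / 2 with ha
  set b := (L 1 + Complex.I * L Complex.I) / 2 with hb
  have hL : ∀ v : ℂ, L v = a * v + b * (starRingEnd ℂ) v := by
    intro v
    have h1 : v = v.re • (1:ℂ) + v.im • Complex.I := by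
      apply Complex.ext <;> simp
    have h2 : L v = v.re * L 1 + v.im * L Complex.I := by
      conv_lhs => rw [h1]
      rw [map_add, map_smul, map_smul, Complex.real_smul, Complex.real_smul]
    have h3 : (starRingEnd ℂ) v = v.re - v.im * Complex.I := by
      apply Complex.ext <;> simp
    have h4 : v = v.re + v.im * Complex.I := (Complex.re_add_im v).symm
    rw [h2, h3, ha, hb]
    conv_rhs => rw [h4]
    simp only [Complex.add_re, Complex.add_im, Complex.ofReal_re, Complex.ofReal_im, Complex.mul_re, Complex.mul_im,
      Complex.I_re, Complex.I_im, mul_zero, mul_one, zero_mul, sub_zero, add_zero, zero_add]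
    linear_combination ((v.im : ℂ) * L Complex.I) * Complex.I_sq
  obtain ⟨p, hp, hpa⟩ := exists_unit a
  obtain ⟨q, hq, hqb⟩ := exists_unit b
  have hp0 : p ≠ 0 := by rw [← norm_ne_zero_iff, hp]; exact one_ne_zero
  have hq0 : q ≠ 0 := by rw [← norm_ne_zero_iff, hq]; exact one_ne_zero
  obtain ⟨v, hv⟩ : ∃ v : ℂ, v ^ 2 = p / q := ⟨_, Complex.cpow_nat_inv_pow (p / q) two_ne_zero⟩
  have hvn : ‖v‖ = 1 := by
    have : ‖v‖ ^ 2 = 1 := by rw [← norm_pow, hv, norm_div, hp, hq, div_one]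
    exact (pow_eq_one_iff_of_nonneg (norm_nonneg _) two_ne_zero).mp this
  refine ⟨v, hvn, ?_⟩
  have hvc : v * (starRingEnd ℂ) v = 1 := by rw [Complex.mul_conj', hvn]; simp
  have hv2 : v ^ 2 * q = p := by rw [hv]; field_simp
  have hh : q * v * L v = ((‖a‖ + ‖b‖ : ℝ) : ℂ) := by
    rw [hL]
    push_cast
    rw [← hpa, ← hqb, ← hv2]
    linear_combination (q * b) * hvc
  have h5 := congrArg norm hh
  rw [norm_mul, norm_mul, hq, hvn, one_mul, one_mul, Complex.norm_real, Real.norm_eq_abs,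
    abs_of_nonneg (by positivity)] at h5
  exact h5.symm

/-- Schwarz–Pick type estimate for solutions of the Poisson equation (Theorem 1.4). -/
theorem stmt3 (g ψ f : ℂ → ℂ)
    (hg : ContinuousOn g (closedBall (0:ℂ) 1))
    (hψint : IntervalIntegrable (fun t : ℝ => ψ (Complex.exp (Complex.I * (t : ℂ))))
      MeasureTheory.volume 0 (2 * Real.pi))
    (hψbdd : ∃ C : ℝ, ∀ ζ ∈ sphere (0:ℂ) 1, ‖ψ ζ‖ ≤ C)
    (hf : ∀ z ∈ ball (0:ℂ) 1, f z = poissonIntegral ψ z - greenPotential g z) :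
    ∀ z ∈ ball (0:ℂ) 1, z ≠ 0 →
      ‖wdz f z‖ + ‖wdzbar f z‖ ≤
        4 * supD (poissonIntegral ψ) / Real.pi * (1 / (1 - ‖z‖ ^ 2)) +
          2 * mu (supD g) ‖z‖ := by
  intro z hz hz0
  have hz1 : ‖z‖ < 1 := by simpa using hz
  have hzp := one_sub_sq_pos hz1
  have hψ := circleInt_of hψint
  by_cases hd : DifferentiableAt ℝ f z
  · obtain ⟨v, hv, hL⟩ := exists_dir (fderiv ℝ f z)
    rw [wdz, wdzbar, hL]
    have hP := poisson_diff hψ hz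
    have hn := isOpen_ball.mem_nhds hz
    have hG : DifferentiableAt ℝ (greenPotential g) z := by
      refine (hP.sub hd).congr_of_eventuallyEq ?_
      filter_upwards [hn] with w hw
      simp [hf w hw]
    have he : fderiv ℝ f z = fderiv ℝ (poissonIntegral ψ) z - fderiv ℝ (greenPotential g) z := by
      rw [← fderiv_sub hP hG]
      apply Filter.EventuallyEq.fderiv_eq
      filter_upwards [hn] with w hw
      simp [hf w hw]
    rw [he, ContinuousLinearMap.sub_apply]
    refine (norm_sub_le _ _).trans (add_le_add (poisson_fderiv_bound hψ hψbdd hz hv) ?_)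
    refine (ContinuousLinearMap.le_opNorm _ _).trans ?_
    rw [hv, mul_one]
    exact green_fderiv hg hz1 hz0 hG
  · have h0 := fderiv_zero_of_not_differentiableAt hd
    simp only [wdz, wdzbar, h0]
    have h1 := supD_nonneg (poissonIntegral ψ)
    have h2 := supD_nonneg g
    have h3 := mu_nonneg (norm_pos_iff.mpr hz0) hz1
    have hpi := Real.pi_pos
    rw [mu_smul]
    simp
    positivity
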